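/- The union V₂₄ ∪ V₂₄′ of the binary tetrahedral group and the set {(±x±y)/√2 : x ≠ y ∈ {1,i,j,k}} is a subgroup of the unit quaternions of order 48 (the binary octahedral group), and V₂₄ is a normal subgroup of index 2 in it. -/

import Mathlib

open Quaternion

noncomputable section

def qi : ℍ[ℝ] := ⟨0, 1, 0, 0⟩
def qj : ℍ[ℝ] := ⟨0, 0, 1, 0⟩
def qk : ℍ[ℝ] := ⟨0, 0, 0, 1⟩

def V8 : Set ℍ[ℝ] := {1, -1, qi, -qi, qj, -qj, qk, -qk}

def V16 : Set ℍ[ℝ] :=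
  {q | ∃ a b c d : ℝ, a ∈ ({1, -1} : Set ℝ) ∧ b ∈ ({1, -1} : Set ℝ) ∧
    c ∈ ({1, -1} : Set ℝ) ∧ d ∈ ({1, -1} : Set ℝ) ∧ q = ⟨a / 2, b / 2, c / 2, d / 2⟩}

def V24 : Set ℍ[ℝ] := V8 ∪ V16

def omg : ℍ[ℝ] := ⟨1 / 2, 1 / 2, 1 / 2, 1 / 2⟩

def V24' : Set ℍ[ℝ] :=
  {q | ∃ x ∈ ({1, qi, qj, qk} : Set ℍ[ℝ]), ∃ y ∈ ({1, qi, qj, qk} : Set ℍ[ℝ]), x ≠ y ∧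
    ∃ s t : ℝ, s ∈ ({1, -1} : Set ℝ) ∧ t ∈ ({1, -1} : Set ℝ) ∧
      q = (Real.sqrt 2)⁻¹ • (s • x + t • y)}

abbrev Z4 := ℤ × ℤ × ℤ × ℤ
abbrev E5 := Bool × Z4

def pmL : List ℤ := [1, -1]
def bvL : List Z4 := [(1,0,0,0), (0,1,0,0), (0,0,1,0), (0,0,0,1)]
def bpL : List (Z4 × Z4) := [((1,0,0,0),(0,1,0,0)), ((1,0,0,0),(0,0,1,0)), ((1,0,0,0),(0,0,0,1)),
  ((0,1,0,0),(0,0,1,0)), ((0,1,0,0),(0,0,0,1)), ((0,0,1,0),(0,0,0,1))]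

def comb (s t : ℤ) (x y : Z4) : Z4 :=
  (s * x.1 + t * y.1, s * x.2.1 + t * y.2.1, s * x.2.2.1 + t * y.2.2.1,
    s * x.2.2.2 + t * y.2.2.2)

def a8 : List E5 := [(false,2,0,0,0), (false,-2,0,0,0), (false,0,2,0,0), (false,0,-2,0,0),
  (false,0,0,2,0), (false,0,0,-2,0), (false,0,0,0,2), (false,0,0,0,-2)]
def a16 : List E5 := pmL.flatMap fun a => pmL.flatMap fun b => pmL.flatMap fun c =>
  pmL.map fun d => (false, a, b, c, d)
def aL : List E5 := a8 ++ a16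
def bL : List E5 := bpL.flatMap fun xy => pmL.flatMap fun s => pmL.map fun t =>
  (true, comb s t xy.1 xy.2)
def cL : List E5 := aL ++ bL

def sc (e : Bool) : ℝ := if e then Real.sqrt 2 / 2 else 1 / 2

def ev (p : E5) : ℍ[ℝ] :=
  ⟨sc p.1 * p.2.1, sc p.1 * p.2.2.1, sc p.1 * p.2.2.2.1, sc p.1 * p.2.2.2.2⟩

def raw (p q : Z4) : Z4 :=
  (p.1 * q.1 - p.2.1 * q.2.1 - p.2.2.1 * q.2.2.1 - p.2.2.2 * q.2.2.2,
   p.1 * q.2.1 + p.2.1 * q.1 + p.2.2.1 * q.2.2.2 - p.2.2.2 * q.2.2.1,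
   p.1 * q.2.2.1 - p.2.1 * q.2.2.2 + p.2.2.1 * q.1 + p.2.2.2 * q.2.1,
   p.1 * q.2.2.2 + p.2.1 * q.2.2.1 - p.2.2.1 * q.2.1 + p.2.2.2 * q.1)

def half (x : Z4) : Z4 := (x.1 / 2, x.2.1 / 2, x.2.2.1 / 2, x.2.2.2 / 2)
def dbl (x : Z4) : Z4 := (2 * x.1, 2 * x.2.1, 2 * x.2.2.1, 2 * x.2.2.2)

def emul (p q : E5) : E5 :=
  (xor p.1 q.1, if p.1 && q.1 then raw p.2 q.2 else half (raw p.2 q.2))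

def cj (p : E5) : E5 := (p.1, p.2.1, -p.2.2.1, -p.2.2.2.1, -p.2.2.2.2)

set_option maxRecDepth 100000 in
theorem em_mem : ∀ p ∈ cL, ∀ q ∈ cL, emul p q ∈ cL ∧
    ((p.1 && q.1) = true ∨ dbl (half (raw p.2 q.2)) = raw p.2 q.2) := by decide +kernel

theorem cj_mem : ∀ p ∈ cL, cj p ∈ cL ∧ emul p (cj p) = (false,2,0,0,0) ∧
    (p.2.1^2 + p.2.2.1^2+p.2.2.2.1^2+p.2.2.2.2^2 = if p.1 then 2 else 4) := by decide +kernel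

theorem aL_iff : ∀ p ∈ cL, (p ∈ aL ↔ p.1 = false) ∧ (p ∈ bL ↔ p.1 = true) := by decide +kernel

theorem c_nodup : cL.Nodup ∧ aL.Nodup ∧ cL.length = 48 ∧ aL.length = 24 := by decide +kernel

theorem no_mix : ∀ p ∈ aL, ∀ q ∈ bL, ¬ (p.2.1 ^ 2 = 2 * q.2.1 ^ 2 ∧
    p.2.2.1 ^ 2 = 2 * q.2.2.1 ^ 2 ∧ p.2.2.2.1 ^ 2 = 2 * q.2.2.2.1 ^ 2 ∧
    p.2.2.2.2 ^ 2 = 2 * q.2.2.2.2 ^ 2) := by decide +kernel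

theorem b_in : ∀ x ∈ bvL, ∀ y ∈ bvL, x ≠ y → ∀ s ∈ pmL, ∀ t ∈ pmL, (true, comb s t x y) ∈ bL := by
  decide +kernel

theorem b_out : ∀ p ∈ bL, ∃ x ∈ bvL, ∃ y ∈ bvL, x ≠ y ∧ ∃ s ∈ pmL, ∃ t ∈ pmL,
    p = (true, comb s t x y) := by
  decide +kernel

theorem a_mem_c {p : E5} (h : p ∈ aL) : p ∈ cL := List.mem_append_left _ h
theorem b_mem_c {p : E5} (h : p ∈ bL) : p ∈ cL := List.mem_append_right _ h

theorem sq2 : Real.sqrt 2 * Real.sqrt 2 = 2 := Real.mul_self_sqrt (by norm_num)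

theorem ev_mul_aux (e f : Bool) (x y z : Z4) (h : if e && f then z = raw x y else dbl z = raw x y) :
    ev (e, x) * ev (f, y) = ev (xor e f, z) := by
  have h2 := sq2
  obtain ⟨x1, x2, x3, x4⟩ := x
  obtain ⟨y1, y2, y3, y4⟩ := y
  obtain ⟨z1, z2, z3, z4⟩ := z
  cases e <;> cases f <;> simp only [raw, dbl, Bool.and_self, Bool.and_true, Bool.and_false,
    if_true, Prod.mk.injEq, Bool.false_eq_true, if_false] at h <;>
  obtain ⟨h1, h3, h4, h5⟩ := h <;>
  replace h1 := congrArg (Int.cast : ℤ → ℝ) h1 <;>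
  replace h3 := congrArg (Int.cast : ℤ → ℝ) h3 <;>
  replace h4 := congrArg (Int.cast : ℤ → ℝ) h4 <;>
  replace h5 := congrArg (Int.cast : ℤ → ℝ) h5 <;>
  push_cast at h1 h3 h4 h5 <;>
  ext <;> simp only [Quaternion.re_mul, Quaternion.imI_mul, Quaternion.imJ_mul, Quaternion.imK_mul] <;>
  simp [ev, sc] <;> grind

theorem ev_mul {p q : E5} (hp : p ∈ cL) (hq : q ∈ cL) : ev p * ev q = ev (emul p q) := by
  have h := (em_mem p hp q hq).2
  apply ev_mul_aux
  rcases h with h | h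
  · simp [h]
  · split_ifs <;> simp_all

theorem ev_one : ev (false,2,0,0,0) = 1 := by
  ext <;> simp [ev, sc]

theorem ev_cj {p : E5} (hp : p ∈ cL) : (ev p)⁻¹ = ev (cj p) := by
  have h := cj_mem p hp
  have := ev_mul hp h.1
  rw [h.2.1, ev_one] at this
  exact inv_eq_of_mul_eq_one_right this

theorem ev_norm {p : E5} (hp : p ∈ cL) : ‖ev p‖ = 1 := by
  have h := (cj_mem p hp).2.2
  have h2 := sq2
  have : ‖ev p‖ * ‖ev p‖ = 1 := by
    rw [← Quaternion.normSq_eq_norm_mul_self, Quaternion.normSq_def']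
    obtain ⟨e, x1, x2, x3, x4⟩ := p
    replace h := congrArg (Int.cast : ℤ → ℝ) h
    cases e <;> simp [ev, sc] at h ⊢ <;> grind
  nlinarith [norm_nonneg (ev p)]

theorem ev_same (e : Bool) (x y : Z4) (h : ev (e, x) = ev (e, y)) : x = y := by
  have hs : sc e ≠ 0 := by cases e <;> simp [sc]
  rw [Quaternion.ext_iff] at h
  simp only [ev, mul_right_inj' hs, Int.cast_inj] at h
  obtain ⟨h1, h2, h3, h4⟩ := h
  ext <;> assumption

theorem ev_diff {p q : E5} (hp : p ∈ aL) (hq : q ∈ bL) : ev p ≠ ev q := by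
  intro h
  have h1 := ((aL_iff p (a_mem_c hp)).1).1 hp
  have h2 := ((aL_iff q (b_mem_c hq)).2).1 hq
  have h3 := no_mix p hp q hq
  obtain ⟨e, x1, x2, x3, x4⟩ := p
  obtain ⟨f, y1, y2, y3, y4⟩ := q
  simp only at h1 h2 h3
  subst h1 h2
  apply h3
  have h5 := sq2
  rw [Quaternion.ext_iff] at h
  simp only [ev, sc] at h
  obtain ⟨h6, h7, h8, h9⟩ := h
  refine ⟨?_, ?_, ?_, ?_⟩ <;> rify <;> simp at h6 h7 h8 h9 <;> grind

theorem ev_inj : Set.InjOn ev {p | p ∈ cL} := by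
  intro p hp q hq h
  rcases List.mem_append.1 hp with h1 | h1 <;> rcases List.mem_append.1 hq with h2 | h2
  · have h3 := ((aL_iff p hp).1).1 h1
    have h4 := ((aL_iff q hq).1).1 h2
    obtain ⟨e, x⟩ := p
    obtain ⟨f, y⟩ := q
    simp only at h3 h4
    subst h3 h4
    rw [ev_same _ _ _ h]
  · exact absurd h (ev_diff h1 h2)
  · exact absurd h.symm (ev_diff h2 h1)
  · have h3 := ((aL_iff p hp).2).1 h1
    have h4 := ((aL_iff q hq).2).1 h2
    obtain ⟨e, x⟩ := p
    obtain ⟨f, y⟩ := q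
    simp only at h3 h4
    subst h3 h4
    rw [ev_same _ _ _ h]

theorem V8_eq : V8 = ev '' {p | p ∈ a8} := by
  have e1 : ev (false,-2,0,0,0) = -1 := by ext <;> simp [ev, sc]
  have e2 : ev (false,0,2,0,0) = qi := by ext <;> simp [ev, sc, qi]
  have e3 : ev (false,0,-2,0,0) = -qi := by ext <;> simp only [Quaternion.re_neg, Quaternion.imI_neg,
    Quaternion.imJ_neg, Quaternion.imK_neg] <;> simp [ev, sc, qi]
  have e4 : ev (false,0,0,2,0) = qj := by ext <;> simp [ev, sc, qj]
  have e5 : ev (false,0,0,-2,0) = -qj := by ext <;> simp only [Quaternion.re_neg, Quaternion.imI_neg,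
    Quaternion.imJ_neg, Quaternion.imK_neg] <;> simp [ev, sc, qj]
  have e6 : ev (false,0,0,0,2) = qk := by ext <;> simp [ev, sc, qk]
  have e7 : ev (false,0,0,0,-2) = -qk := by ext <;> simp only [Quaternion.re_neg, Quaternion.imI_neg,
    Quaternion.imJ_neg, Quaternion.imK_neg] <;> simp [ev, sc, qk]
  ext q
  simp only [V8, a8, Set.mem_image, Set.mem_ofPred_eq, List.mem_cons, List.not_mem_nil, or_false,
    or_and_right, exists_or, exists_eq_left, Set.mem_insert_iff, Set.mem_singleton_iff,
    ev_one, e1, e2, e3, e4, e5, e6, e7, eq_comm (a := q)]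

theorem pm_real {a : ℝ} : a ∈ ({1, -1} : Set ℝ) ↔ ∃ n ∈ pmL, a = (n : ℝ) := by
  simp [pmL]

theorem V16_eq : V16 = ev '' {p | p ∈ a16} := by
  ext q
  simp only [V16, pm_real, Set.mem_image, Set.mem_ofPred_eq, a16, List.mem_flatMap, List.mem_map]
  constructor
  · rintro ⟨_, _, _, _, ⟨a, ha, rfl⟩, ⟨b, hb, rfl⟩, ⟨c, hc, rfl⟩, ⟨d, hd, rfl⟩, rfl⟩
    refine ⟨_, ⟨a, ha, b, hb, c, hc, d, hd, rfl⟩, ?_⟩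
    ext <;> simp [ev, sc] <;> ring
  · rintro ⟨_, ⟨a, ha, b, hb, c, hc, d, hd, rfl⟩, rfl⟩
    refine ⟨_, _, _, _, ⟨a, ha, rfl⟩, ⟨b, hb, rfl⟩, ⟨c, hc, rfl⟩, ⟨d, hd, rfl⟩, ?_⟩
    ext <;> simp [ev, sc] <;> ring

theorem V24_eq : V24 = ev '' {p | p ∈ aL} := by
  rw [V24, V8_eq, V16_eq, ← Set.image_union]
  congr 1
  ext p
  simp [aL]

def zq (x : Z4) : ℍ[ℝ] := ⟨x.1, x.2.1, x.2.2.1, x.2.2.2⟩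

theorem bv_q {x : ℍ[ℝ]} : x ∈ ({1, qi, qj, qk} : Set ℍ[ℝ]) ↔ ∃ v ∈ bvL, x = zq v := by
  have e0 : zq (1,0,0,0) = 1 := by ext <;> simp [zq]
  have e1 : zq (0,1,0,0) = qi := by ext <;> simp [zq, qi]
  have e2 : zq (0,0,1,0) = qj := by ext <;> simp [zq, qj]
  have e3 : zq (0,0,0,1) = qk := by ext <;> simp [zq, qk]
  simp only [bvL, List.mem_cons, List.not_mem_nil, or_false,
    or_and_right, exists_or, exists_eq_left, Set.mem_insert_iff, Set.mem_singleton_iff, e0, e1, e2, e3]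

theorem zq_inj {x y : Z4} (h : zq x = zq y) : x = y := by
  rw [Quaternion.ext_iff] at h
  simp only [zq, Int.cast_inj] at h
  obtain ⟨h1, h2, h3, h4⟩ := h
  ext <;> assumption

theorem ev_comb (s t : ℤ) (x y : Z4) :
    ev (true, comb s t x y) = (Real.sqrt 2)⁻¹ • ((s : ℝ) • zq x + (t : ℝ) • zq y) := by
  have h : (Real.sqrt 2)⁻¹ = Real.sqrt 2 / 2 := by
    have := sq2
    field_simp
    nlinarith
  rw [h]
  ext <;> simp only [Quaternion.re_smul, Quaternion.imI_smul, Quaternion.imJ_smul,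
    Quaternion.imK_smul, Quaternion.re_add, Quaternion.imI_add, Quaternion.imJ_add,
    Quaternion.imK_add] <;> simp [ev, sc, comb, zq]

theorem V24'_eq : V24' = ev '' {p | p ∈ bL} := by
  ext q
  simp only [V24', pm_real, bv_q, Set.mem_image, Set.mem_ofPred_eq]
  constructor
  · rintro ⟨_, ⟨x, hx, rfl⟩, _, ⟨y, hy, rfl⟩, hne, _, _, ⟨s, hs, rfl⟩, ⟨t, ht, rfl⟩, rfl⟩
    exact ⟨_, b_in x hx y hy (fun h => hne (by rw [h])) s hs t ht, ev_comb s t x y⟩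
  · rintro ⟨p, hp, rfl⟩
    obtain ⟨x, hx, y, hy, hne, s, hs, t, ht, rfl⟩ := b_out p hp
    exact ⟨_, ⟨x, hx, rfl⟩, _, ⟨y, hy, rfl⟩, fun h => hne (zq_inj h), _, _, ⟨s, hs, rfl⟩,
      ⟨t, ht, rfl⟩, ev_comb s t x y⟩

theorem V48_eq : V24 ∪ V24' = ev '' {p | p ∈ cL} := by
  rw [V24_eq, V24'_eq, ← Set.image_union]
  congr 1
  ext p
  simp [cL]

theorem card_aux (l : List E5) (hl : l.Nodup) (hs : ∀ p ∈ l, p ∈ cL) :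
    (ev '' {p | p ∈ l}).ncard = l.length := by
  have hsub : {p | p ∈ l} ⊆ {p | p ∈ cL} := fun p hp => hs p hp
  rw [Set.InjOn.ncard_image (ev_inj.mono hsub), ← List.toFinset_card_of_nodup hl,
    ← Set.ncard_coe_finset]
  congr 1
  ext p
  simp

theorem mem_a {p : E5} (hp : p ∈ cL) (h : p.1 = false) : p ∈ aL := ((aL_iff p hp).1).2 h

theorem stmt_5 :
    (1 : ℍ[ℝ]) ∈ V24 ∪ V24' ∧
    (∀ p ∈ V24 ∪ V24', ∀ q ∈ V24 ∪ V24', p * q ∈ V24 ∪ V24') ∧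
    (∀ q ∈ V24 ∪ V24', q⁻¹ ∈ V24 ∪ V24') ∧
    (∀ q ∈ V24 ∪ V24', ‖q‖ = 1) ∧
    (V24 ∪ V24').ncard = 48 ∧ V24.ncard = 24 ∧
    (∀ g ∈ V24 ∪ V24', ∀ q ∈ V24, g * q * g⁻¹ ∈ V24) ∧
    (∀ g ∈ V24 ∪ V24', g ∉ V24 → V24 ∪ V24' = V24 ∪ (fun q => g * q) '' V24) := by
  rw [V48_eq, V24_eq]
  obtain ⟨n1, n2, n3, n4⟩ := c_nodup
  refine ⟨⟨_, by decide, ev_one⟩, ?_, ?_, ?_, ?_, ?_, ?_, ?_⟩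
  · rintro _ ⟨p, hp, rfl⟩ _ ⟨q, hq, rfl⟩
    exact ⟨_, (em_mem p hp q hq).1, (ev_mul hp hq).symm⟩
  · rintro _ ⟨p, hp, rfl⟩
    exact ⟨_, (cj_mem p hp).1, (ev_cj hp).symm⟩
  · rintro _ ⟨p, hp, rfl⟩
    exact ev_norm hp
  · rw [card_aux _ n1 (fun _ h => h), n3]
  · rw [card_aux _ n2 (fun _ h => a_mem_c h), n4]
  · rintro _ ⟨g, hg, rfl⟩ _ ⟨q, hq, rfl⟩
    have hq' := a_mem_c hq
    have h1 := (em_mem g hg q hq').1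
    have h2 := (cj_mem g hg).1
    rw [ev_cj hg, ev_mul hg hq', ev_mul h1 h2]
    refine ⟨_, mem_a (em_mem _ h1 _ h2).1 ?_, rfl⟩
    have h3 := ((aL_iff q hq').1).1 hq
    simp [emul, cj, h3]
  · rintro _ ⟨g, hg, rfl⟩ hn
    have hgt : g.1 = true := by
      by_contra h
      exact hn ⟨g, mem_a hg (by simpa using h), rfl⟩
    have h2 := (cj_mem g hg).1
    apply Set.Subset.antisymm
    · rintro _ ⟨q, hq, rfl⟩
      rcases List.mem_append.1 hq with h | h
      · exact Or.inl ⟨q, h, rfl⟩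
      · right
        have h3 := ((aL_iff q hq).2).1 h
        refine ⟨_, ⟨emul (cj g) q, mem_a (em_mem _ h2 _ hq).1 (by simp [emul, cj, hgt, h3]), rfl⟩, ?_⟩
        have hne : ev g ≠ 0 := by
          intro h0
          have := ev_norm hg
          simp [h0] at this
        simp only
        rw [← ev_mul h2 hq, ← ev_cj hg, mul_inv_cancel_left₀ hne]
    · rintro _ (⟨q, hq, rfl⟩ | ⟨_, ⟨q, hq, rfl⟩, rfl⟩)
      · exact ⟨q, a_mem_c hq, rfl⟩
      · exact ⟨_, (em_mem g hg q (a_mem_c hq)).1, (ev_mul hg (a_mem_c hq)).symm⟩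

end
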